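/- Let f_n(x) = Γ_n ∑_{k=1}^n (1/k) 2^{−2k} (x₁x₂∂₁∂₂φ̌)(2^k x) on ℝ² with φ radial smooth supported in {4/3 ≤ |ξ| ≤ 3/2}, Γ_n = 1/ln ln n, and define u₀ⁿ = (∂₂f_n, −∂₁f_n). Then div u₀ⁿ = 0, and ‖u₀ⁿ‖_{W^{1,∞}(ℝ²)} ≤ C Γ_n for a constant C independent of n; in particular ‖u₀ⁿ‖_{W^{1,∞}} → 0 as n → ∞. -/

import Mathlib

open MeasureTheory Finset Filter
open scoped FourierTransform

/-- `Γ_n = 1 / ln(ln n)`. -/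
noncomputable def Gam (n : ℕ) : ℝ := 1 / Real.log (Real.log n)

/-- The (complex-valued) inverse Fourier transform of a real function on `ℝ²`. -/
noncomputable def phinv2 (φ : EuclideanSpace ℝ (Fin 2) → ℝ) :
    EuclideanSpace ℝ (Fin 2) → ℂ :=
  𝓕⁻ (fun ξ => (φ ξ : ℂ))

/-- Directional partial derivative `∂_i` on `ℝ²` (complex-valued functions). -/
noncomputable def D2 (i : Fin 2) (g : EuclideanSpace ℝ (Fin 2) → ℂ) :
    EuclideanSpace ℝ (Fin 2) → ℂ :=
  fun x => fderiv ℝ g x (EuclideanSpace.single i 1)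

/-- `f_n(x) = Γ_n ∑_{k=1}^n (1/k) 2^{-2k} (x₁x₂ ∂₁∂₂φ̌)(2^k x)`. -/
noncomputable def fDamp (φ : EuclideanSpace ℝ (Fin 2) → ℝ) (n : ℕ) :
    EuclideanSpace ℝ (Fin 2) → ℂ :=
  fun x => (Gam n : ℂ) * ∑ k ∈ Finset.Icc 1 n,
    (((1 / (k : ℝ)) * (2 : ℝ) ^ (-(2 * (k : ℤ))) *
        (((2 : ℝ) ^ k • x) 0 * ((2 : ℝ) ^ k • x) 1) : ℝ) : ℂ) *
      D2 0 (D2 1 (phinv2 φ)) ((2 : ℝ) ^ k • x)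

/-
Every second derivative of `g(y) = y₁y₂∂₁∂₂φ̌(y)` at the origin is a multiple of `∂₁∂₂φ̌(0)`, which
is itself a multiple of the moment `∫ ξ₁ξ₂φ(ξ) dξ` and so vanishes for radial `φ`. Each derivative
of `f_n` of order one or two is therefore `Γ_n ∑ (1/k) 2^{-mk} χ(2^k x)` with `χ` Schwartz and
`χ(0) = 0`. Such a `χ` is small near the origin as well as at infinity, so that on every dyadic
orbit `∑ ‖χ(2^k x)‖` is bounded by a telescoping sum.
-/

open SchwartzMap LineDeriv

section DyadicSum

variable {E F : Type*} [NormedAddCommGroup E] [NormedSpace ℝ E] [NormedAddCommGroup F]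

theorem sum_sub_succ_le_of_antitone {u : ℕ → ℝ} (hu : Antitone u) (hu0 : ∀ k, 0 ≤ u k)
    (s : Finset ℕ) : ∑ k ∈ s, (u k - u (k + 1)) ≤ u 0 := by
  obtain ⟨N, hN⟩ := s.exists_nat_subset_range
  calc ∑ k ∈ s, (u k - u (k + 1))
      ≤ ∑ k ∈ range N, (u k - u (k + 1)) :=
        sum_le_sum_of_subset_of_nonneg hN fun k _ _ => sub_nonneg.mpr (hu k.le_succ)
    _ = u 0 - u N := sum_range_sub' u N
    _ ≤ u 0 := sub_le_self _ (hu0 N)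

theorem le_mul_inv_sub_inv_of_le_mul_of_mul_le {s t A B : ℝ} (hs : 0 ≤ s) (ht : 0 ≤ t)
    (hA : s ≤ A * t) (hB : t * s ≤ B) :
    s ≤ 6 * (A + B) * ((1 + t)⁻¹ - (1 + 2 * t)⁻¹) := by
  have hst : t * s ≤ (A + B) * t := by
    rcases le_total t 1 with h | h
    · nlinarith [mul_nonneg ht hs]
    · nlinarith [mul_nonneg ht hs]
  have hker : (1 + t)⁻¹ - (1 + 2 * t)⁻¹ = t / ((1 + t) * (1 + 2 * t)) := by
    field_simp
    ring
  rw [hker, ← mul_div_assoc, le_div_iff₀ (by positivity)]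
  nlinarith [mul_nonneg ht hs]

theorem sum_norm_dyadic_le {f : E → F} {A B : ℝ} (hA₀ : 0 ≤ A) (hA : ∀ x, ‖f x‖ ≤ A * ‖x‖)
    (hB : ∀ x, ‖x‖ * ‖f x‖ ≤ B) (s : Finset ℕ) (x : E) :
    ∑ k ∈ s, ‖f ((2 : ℝ) ^ k • x)‖ ≤ 6 * (A + B) := by
  have hB₀ : 0 ≤ B := by simpa using hB 0
  let u : ℕ → ℝ := fun k => (1 + 2 ^ k * ‖x‖)⁻¹
  have hu : Antitone u := antitone_nat_of_succ_le fun k => by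
    have : (2 : ℝ) ^ k ≤ 2 ^ (k + 1) := by gcongr <;> simp
    dsimp only [u]
    gcongr
  have hterm (k : ℕ) : ‖f ((2 : ℝ) ^ k • x)‖ ≤ 6 * (A + B) * (u k - u (k + 1)) := by
    have hnorm : ‖(2 : ℝ) ^ k • x‖ = 2 ^ k * ‖x‖ := by simp [norm_smul]
    have h := le_mul_inv_sub_inv_of_le_mul_of_mul_le (norm_nonneg _) (norm_nonneg _)
      (hA ((2 : ℝ) ^ k • x)) (hB ((2 : ℝ) ^ k • x))
    rwa [hnorm, ← mul_assoc 2, ← pow_succ'] at h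
  calc ∑ k ∈ s, ‖f ((2 : ℝ) ^ k • x)‖
      ≤ 6 * (A + B) * ∑ k ∈ s, (u k - u (k + 1)) := by
        rw [mul_sum]
        exact sum_le_sum fun k _ => hterm k
    _ ≤ 6 * (A + B) * 1 := by
        gcongr
        refine (sum_sub_succ_le_of_antitone hu (fun k => by positivity) s).trans ?_
        exact inv_le_one_of_one_le₀ (by simp)
    _ = 6 * (A + B) := mul_one _

variable [NormedSpace ℝ F]

theorem schwartz_norm_le_seminorm_mul_norm (χ : 𝓢(E, F)) (hχ : χ 0 = 0) (x : E) :
    ‖χ x‖ ≤ SchwartzMap.seminorm ℝ 0 1 χ * ‖x‖ := by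
  have hderiv (y : E) : ‖fderiv ℝ χ y‖ ≤ SchwartzMap.seminorm ℝ 0 1 χ := by
    simpa [norm_iteratedFDeriv_one] using χ.norm_iteratedFDeriv_le_seminorm ℝ 1 y
  simpa [hχ] using convex_univ.norm_image_sub_le_of_norm_fderiv_le (𝕜 := ℝ)
    (fun y _ => χ.differentiableAt) (fun y _ => hderiv y) (Set.mem_univ 0) (Set.mem_univ x)

/-- The damped dyadic sum `∑_{k=1}^n (1/k) 2^{-mk} χ(2^k x)`. The weight `2^{-mk}` absorbs the
factors `2^k` produced by up to `m` derivatives. -/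
noncomputable def dyadicSum (m n : ℕ) (χ : E → F) (x : E) : F :=
  ∑ k ∈ Icc 1 n, ((k : ℝ)⁻¹ * (((2 : ℝ) ^ k) ^ m)⁻¹) • χ ((2 : ℝ) ^ k • x)

theorem contDiff_dyadicSum {r : WithTop ℕ∞} {χ : E → F} (hχ : ContDiff ℝ r χ) (m n : ℕ) :
    ContDiff ℝ r (dyadicSum m n χ) := by
  unfold dyadicSum
  fun_prop

theorem fderiv_dyadicSum_succ_apply {χ : E → F} (hχ : Differentiable ℝ χ) (m n : ℕ) (x v : E) :
    fderiv ℝ (dyadicSum (m + 1) n χ) x v = dyadicSum m n (fun y => fderiv ℝ χ y v) x := by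
  unfold dyadicSum
  rw [fderiv_fun_sum fun k _ => by fun_prop, _root_.sum_apply]
  refine sum_congr rfl fun k _ => ?_
  rw [fderiv_fun_const_smul (by fun_prop), fderiv_comp_smul]
  simp only [smul_apply, smul_smul]
  congr 1
  field_simp
  ring

theorem norm_dyadicSum_le (m n : ℕ) (χ : E → F) (x : E) :
    ‖dyadicSum m n χ x‖ ≤ ∑ k ∈ Icc 1 n, ‖χ ((2 : ℝ) ^ k • x)‖ := by
  refine norm_sum_le_of_le _ fun k hk => ?_
  have hk1 : (1 : ℝ) ≤ k := by exact_mod_cast (mem_Icc.mp hk).1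
  have h2 : (1 : ℝ) ≤ ((2 : ℝ) ^ k) ^ m := one_le_pow₀ (one_le_pow₀ one_le_two)
  rw [norm_smul, Real.norm_of_nonneg (by positivity)]
  exact mul_le_of_le_one_left (norm_nonneg _)
    (mul_le_one₀ (inv_le_one_of_one_le₀ hk1) (by positivity) (inv_le_one_of_one_le₀ h2))

theorem exists_norm_dyadicSum_le (χ : 𝓢(E, F)) (hχ : χ 0 = 0) :
    ∃ C, 0 ≤ C ∧ ∀ m n x, ‖dyadicSum m n χ x‖ ≤ C := by
  refine ⟨6 * (SchwartzMap.seminorm ℝ 0 1 χ + SchwartzMap.seminorm ℝ 1 0 χ), by positivity,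
    fun m n x => (norm_dyadicSum_le m n χ x).trans ?_⟩
  refine sum_norm_dyadic_le (apply_nonneg _ χ) (schwartz_norm_le_seminorm_mul_norm χ hχ)
    (fun y => ?_) _ x
  simpa using χ.norm_pow_mul_le_seminorm ℝ 1 y

end DyadicSum

section QuadraticFactor

variable {E F : Type*} [NormedAddCommGroup E] [NormedSpace ℝ E]
  [NormedAddCommGroup F] [NormedSpace ℝ F]

theorem smulLeftCLM_clm_apply (ℓ : E →L[ℝ] ℝ) (f : 𝓢(E, F)) (x : E) :
    smulLeftCLM F ℓ f x = ℓ x • f x :=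
  SchwartzMap.smulLeftCLM_apply_apply ℓ.hasTemperateGrowth f x

theorem lineDerivOp_smulLeftCLM_clm (ℓ : E →L[ℝ] ℝ) (f : 𝓢(E, F)) (v : E) :
    ∂_{v} (smulLeftCLM F ℓ f) = ℓ v • f + smulLeftCLM F ℓ (∂_{v} f) := by
  ext x
  have hprod : ⇑(smulLeftCLM F ℓ f) = fun y => ℓ y • f y :=
    funext (smulLeftCLM_clm_apply ℓ f)
  rw [lineDerivOp_apply_eq_fderiv, hprod,
    fderiv_fun_smul ℓ.differentiableAt f.differentiableAt]
  simp [smulLeftCLM_clm_apply, lineDerivOp_apply_eq_fderiv, add_comm]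

theorem lineDerivOp_smulLeftCLM_smulLeftCLM_apply_zero (ℓ₁ ℓ₂ : E →L[ℝ] ℝ) (f : 𝓢(E, F)) (v : E) :
    (∂_{v} (smulLeftCLM F ℓ₁ (smulLeftCLM F ℓ₂ f))) 0 = 0 := by
  simp [lineDerivOp_smulLeftCLM_clm, smulLeftCLM_clm_apply]

theorem lineDerivOp_lineDerivOp_smulLeftCLM_smulLeftCLM_apply_zero (ℓ₁ ℓ₂ : E →L[ℝ] ℝ)
    (f : 𝓢(E, F)) (v w : E) :
    (∂_{v} (∂_{w} (smulLeftCLM F ℓ₁ (smulLeftCLM F ℓ₂ f)))) 0 =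
      (ℓ₁ v * ℓ₂ w + ℓ₁ w * ℓ₂ v) • f 0 := by
  simp [lineDerivOp_smulLeftCLM_clm, lineDerivOp_add, lineDerivOp_smul, smulLeftCLM_clm_apply,
    smul_smul, add_smul, mul_comm (ℓ₂ w), add_comm]

end QuadraticFactor

section Fourier

variable {V : Type*} [NormedAddCommGroup V] [InnerProductSpace ℝ V] [FiniteDimensional ℝ V]
  [MeasurableSpace V] [BorelSpace V]

theorem lineDerivOp_lineDerivOp_fourierInv_apply_zero {F : Type*} [NormedAddCommGroup F]
    [NormedSpace ℂ F] (f : 𝓢(V, F)) (v w : V) :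
    (∂_{v} (∂_{w} (𝓕⁻ f))) 0 =
      (2 * Real.pi * Complex.I) ^ 2 • ∫ ξ, (inner ℝ ξ v * inner ℝ ξ w) • f ξ := by
  rw [lineDerivOp_fourierInv_eq, lineDerivOp_fourierInv_eq,
    SchwartzMap.fourierInv_coe, Real.fourierInv_eq]
  have hg (u : V) : (inner ℝ · u : V → ℝ).HasTemperateGrowth := by fun_prop
  simp only [smul_apply, smulLeftCLM_apply_apply (hg _), inner_zero_right,
    AddChar.map_zero_eq_one, one_smul, smul_comm (inner ℝ _ v) (2 * (Real.pi : ℂ) * Complex.I),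
    integral_smul, smul_smul, sq]

theorem integral_inner_mul_inner_smul_eq_zero_of_radial {F : Type*} [NormedAddCommGroup F]
    [NormedSpace ℝ F] {f : V → F} (hf : ∀ ξ η, ‖ξ‖ = ‖η‖ → f ξ = f η) {v w : V}
    (hvw : inner ℝ v w = 0) : ∫ ξ, (inner ℝ ξ v * inner ℝ ξ w) • f ξ = 0 := by
  let R : V ≃ₗᵢ[ℝ] V := (ℝ ∙ v)ᗮ.reflection
  have hv (ξ : V) : inner ℝ (R ξ) v = -inner ℝ ξ v := by
    rw [← R.inner_map_map ξ v, Submodule.reflection_orthogonalComplement_singleton_eq_neg,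
      inner_neg_right, neg_neg]
  have hw (ξ : V) : inner ℝ (R ξ) w = inner ℝ ξ w := by
    rw [← R.inner_map_map ξ w, Submodule.reflection_mem_subspace_eq_self
      (Submodule.mem_orthogonal_singleton_iff_inner_right.mpr hvw)]
  have hodd := calc ∫ ξ, (inner ℝ ξ v * inner ℝ ξ w) • f ξ
      = ∫ ξ, (inner ℝ (R ξ) v * inner ℝ (R ξ) w) • f (R ξ) :=
        (R.measurePreserving.integral_comp' (f := R.toMeasurableEquiv) _).symm
    _ = -∫ ξ, (inner ℝ ξ v * inner ℝ ξ w) • f ξ := by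
        simp only [hv, hw, hf _ _ (R.norm_map _), neg_mul, neg_smul, integral_neg]
  have := IsAddTorsionFree.of_isTorsionFree ℝ F
  exact self_eq_neg.mp hodd

end Fourier

section Plane

/-- The partial derivative `∂_i` of a Schwartz function on `ℝ²`, again as a Schwartz function; its
underlying function is `D2 i`. -/
noncomputable def partialDeriv (i : Fin 2) (f : 𝓢(EuclideanSpace ℝ (Fin 2), ℂ)) :
    𝓢(EuclideanSpace ℝ (Fin 2), ℂ) :=
  ∂_{EuclideanSpace.single i (1 : ℝ)} f

theorem D2_coe_schwartz (i : Fin 2) (f : 𝓢(EuclideanSpace ℝ (Fin 2), ℂ)) :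
    D2 i f = partialDeriv i f := by
  ext x
  rw [partialDeriv, lineDerivOp_apply_eq_fderiv, D2]

theorem D2_const_smul_dyadicSum_succ (i : Fin 2) (c : ℝ) (m n : ℕ)
    (χ : 𝓢(EuclideanSpace ℝ (Fin 2), ℂ)) :
    D2 i (fun x => c • dyadicSum (m + 1) n χ x) =
      fun x => c • dyadicSum m n (partialDeriv i χ) x := by
  ext x
  have hdiff : DifferentiableAt ℝ (dyadicSum (m + 1) n χ) x :=
    (contDiff_dyadicSum (χ.smooth 1) _ n).differentiable one_ne_zero x
  rw [D2, fderiv_fun_const_smul hdiff, smul_apply,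
    fderiv_dyadicSum_succ_apply χ.differentiable, ← D2_coe_schwartz]
  rfl

theorem D2_comm {f : EuclideanSpace ℝ (Fin 2) → ℂ} (hf : ContDiff ℝ 2 f) (i j : Fin 2)
    (x : EuclideanSpace ℝ (Fin 2)) : D2 i (D2 j f) x = D2 j (D2 i f) x := by
  have hdiff : DifferentiableAt ℝ (fderiv ℝ f) x :=
    (hf.fderiv_right (m := 1) le_rfl).differentiable one_ne_zero x
  have hsnd (i j : Fin 2) : D2 i (D2 j f) x =
      fderiv ℝ (fderiv ℝ f) x (EuclideanSpace.single i 1) (EuclideanSpace.single j 1) := by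
    unfold D2
    rw [fderiv_clm_apply hdiff (by fun_prop)]
    simp
  rw [hsnd, hsnd]
  exact hf.contDiffAt.isSymmSndFDerivAt (by simp) _ _

theorem div_rotated_gradient {f : EuclideanSpace ℝ (Fin 2) → ℂ} (hf : ContDiff ℝ 2 f)
    (x : EuclideanSpace ℝ (Fin 2)) :
    D2 0 (D2 1 f) x + D2 1 (fun y => -(D2 0 f y)) x = 0 := by
  have hneg : D2 1 (fun y => -(D2 0 f y)) x = -D2 1 (D2 0 f) x := by
    rw [D2, fderiv_fun_neg]
    rfl
  rw [hneg, D2_comm hf 0 1, add_neg_cancel]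

/-- The profile `y₁y₂∂₁∂₂φ̌` whose dyadic rescalings make up `f_n`, as a Schwartz function. -/
noncomputable def dampProfile (φ : 𝓢(EuclideanSpace ℝ (Fin 2), ℝ)) :
    𝓢(EuclideanSpace ℝ (Fin 2), ℂ) :=
  smulLeftCLM ℂ (EuclideanSpace.proj 0 : EuclideanSpace ℝ (Fin 2) →L[ℝ] ℝ) <|
    smulLeftCLM ℂ (EuclideanSpace.proj 1 : EuclideanSpace ℝ (Fin 2) →L[ℝ] ℝ) <|
      partialDeriv 0 <| partialDeriv 1 <| 𝓕⁻ (φ.postcompCLM Complex.ofRealCLM)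

theorem fDamp_eq_smul_dyadicSum (φ : 𝓢(EuclideanSpace ℝ (Fin 2), ℝ)) (n : ℕ) :
    fDamp φ n = fun x => Gam n • dyadicSum 2 n (dampProfile φ) x := by
  have hφ : phinv2 φ = 𝓕⁻ (φ.postcompCLM Complex.ofRealCLM) := by
    rw [fourierInv_coe]
    rfl
  ext x
  simp only [fDamp, dyadicSum, dampProfile, hφ, D2_coe_schwartz, smulLeftCLM_clm_apply,
    Complex.real_smul, PiLp.proj_apply]
  congr 1
  refine sum_congr rfl fun k _ => ?_
  have hpow : (2 : ℝ) ^ (-(2 * (k : ℤ))) = (((2 : ℝ) ^ k) ^ 2)⁻¹ := by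
    rw [zpow_neg, mul_comm, zpow_mul, zpow_natCast, zpow_ofNat]
  rw [hpow]
  push_cast
  ring

theorem D2_fDamp (φ : 𝓢(EuclideanSpace ℝ (Fin 2), ℝ)) (n : ℕ) (i : Fin 2) :
    D2 i (fDamp φ n) =
      fun x => Gam n • dyadicSum 1 n (partialDeriv i (dampProfile φ)) x := by
  rw [fDamp_eq_smul_dyadicSum, D2_const_smul_dyadicSum_succ]

theorem D2_D2_fDamp (φ : 𝓢(EuclideanSpace ℝ (Fin 2), ℝ)) (n : ℕ) (i j : Fin 2) :
    D2 i (D2 j (fDamp φ n)) =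
      fun x => Gam n • dyadicSum 0 n (partialDeriv i (partialDeriv j (dampProfile φ))) x := by
  rw [D2_fDamp, D2_const_smul_dyadicSum_succ]

theorem contDiff_fDamp (φ : 𝓢(EuclideanSpace ℝ (Fin 2), ℝ)) (n : ℕ) :
    ContDiff ℝ 2 (fDamp φ n) := by
  rw [fDamp_eq_smul_dyadicSum]
  exact (contDiff_dyadicSum ((dampProfile φ).smooth 2) 2 n).const_smul (Gam n)

theorem Gam_nonneg {n : ℕ} (hn : 3 ≤ n) : 0 ≤ Gam n := by
  have h3 : (3 : ℝ) ≤ n := by exact_mod_cast hn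
  have hlog : 1 ≤ Real.log n := by
    rw [Real.le_log_iff_exp_le (by positivity)]
    linarith [Real.exp_one_lt_three]
  exact one_div_nonneg.mpr (Real.log_nonneg hlog)

theorem tendsto_Gam : Tendsto Gam atTop (nhds 0) := by
  have hloglog : Tendsto (fun n : ℕ => Real.log (Real.log n)) atTop atTop :=
    Real.tendsto_log_atTop.comp (Real.tendsto_log_atTop.comp tendsto_natCast_atTop_atTop)
  exact hloglog.inv_tendsto_atTop.congr fun n => (one_div (Real.log (Real.log n))).symm

theorem partialDeriv_dampProfile_apply_zero (φ : 𝓢(EuclideanSpace ℝ (Fin 2), ℝ)) (i : Fin 2) :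
    partialDeriv i (dampProfile φ) 0 = 0 :=
  lineDerivOp_smulLeftCLM_smulLeftCLM_apply_zero _ _ _ _

theorem exists_norm_D2_fDamp_le (φ : 𝓢(EuclideanSpace ℝ (Fin 2), ℝ)) (i : Fin 2) :
    ∃ C, 0 ≤ C ∧ ∀ n x, ‖D2 i (fDamp φ n) x‖ ≤ C * |Gam n| := by
  obtain ⟨C, hC₀, hC⟩ := exists_norm_dyadicSum_le _ (partialDeriv_dampProfile_apply_zero φ i)
  refine ⟨C, hC₀, fun n x => ?_⟩
  rw [D2_fDamp, norm_smul, Real.norm_eq_abs, mul_comm]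
  gcongr
  exact hC 1 n x

theorem partialDeriv_partialDeriv_dampProfile_apply_zero {φ : 𝓢(EuclideanSpace ℝ (Fin 2), ℝ)}
    (hφ : ∫ ξ, ξ 0 * ξ 1 * φ ξ = 0) (i j : Fin 2) :
    partialDeriv i (partialDeriv j (dampProfile φ)) 0 = 0 := by
  have hmoment : ∫ ξ : EuclideanSpace ℝ (Fin 2), (ξ 0 * ξ 1) • (φ ξ : ℂ) = 0 := by
    simp_rw [Complex.real_smul, ← Complex.ofReal_mul]
    rw [integral_complex_ofReal, hφ, Complex.ofReal_zero]
  unfold partialDeriv dampProfile partialDeriv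
  rw [lineDerivOp_lineDerivOp_smulLeftCLM_smulLeftCLM_apply_zero,
    lineDerivOp_lineDerivOp_fourierInv_apply_zero]
  simp only [EuclideanSpace.inner_single_right, one_mul, conj_trivial, postcompCLM_apply,
    Complex.ofRealCLM_apply, hmoment, smul_zero]

theorem exists_norm_D2_D2_fDamp_le {φ : 𝓢(EuclideanSpace ℝ (Fin 2), ℝ)}
    (hφ : ∫ ξ, ξ 0 * ξ 1 * φ ξ = 0) (i j : Fin 2) :
    ∃ C, 0 ≤ C ∧ ∀ n x, ‖D2 i (D2 j (fDamp φ n)) x‖ ≤ C * |Gam n| := by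
  obtain ⟨C, hC₀, hC⟩ := exists_norm_dyadicSum_le _
    (partialDeriv_partialDeriv_dampProfile_apply_zero hφ i j)
  refine ⟨C, hC₀, fun n x => ?_⟩
  rw [D2_D2_fDamp, norm_smul, Real.norm_eq_abs, mul_comm]
  gcongr
  exact hC 0 n x

theorem integral_coord_mul_coord_mul_eq_zero_of_radial {φ : EuclideanSpace ℝ (Fin 2) → ℝ}
    (hφ : ∀ ξ η, ‖ξ‖ = ‖η‖ → φ ξ = φ η) : ∫ ξ, ξ 0 * ξ 1 * φ ξ = 0 := by
  have h := integral_inner_mul_inner_smul_eq_zero_of_radial hφ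
    (v := EuclideanSpace.single 0 1) (w := EuclideanSpace.single 1 1)
    (by simp [EuclideanSpace.inner_single_left])
  simpa [EuclideanSpace.inner_single_right] using h

end Plane

-- The moment condition says `∂₁∂₂φ̌(0) = 0`.
theorem stmt18_general (φ : 𝓢(EuclideanSpace ℝ (Fin 2), ℝ)) (hφ : ∫ ξ, ξ 0 * ξ 1 * φ ξ = 0) :
    (∀ n : ℕ, ∀ x : EuclideanSpace ℝ (Fin 2),
      D2 0 (D2 1 (fDamp φ n)) x + D2 1 (fun y => -(D2 0 (fDamp φ n) y)) x = 0) ∧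
    ∃ C : ℝ, 0 < C ∧
      (∀ n : ℕ, 3 ≤ n → ∀ x : EuclideanSpace ℝ (Fin 2),
        ‖D2 1 (fDamp φ n) x‖ + ‖D2 0 (fDamp φ n) x‖
          + ‖D2 0 (D2 1 (fDamp φ n)) x‖ + ‖D2 1 (D2 1 (fDamp φ n)) x‖
          + ‖D2 0 (D2 0 (fDamp φ n)) x‖ + ‖D2 1 (D2 0 (fDamp φ n)) x‖
            ≤ C * Gam n) ∧
      Tendsto (fun n : ℕ => C * Gam n) atTop (nhds 0) := by
  refine ⟨fun n => div_rotated_gradient (contDiff_fDamp φ n), ?_⟩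
  choose A hA₀ hA using exists_norm_D2_fDamp_le φ
  choose B hB₀ hB using exists_norm_D2_D2_fDamp_le hφ
  refine ⟨A 1 + A 0 + B 0 1 + B 1 1 + B 0 0 + B 1 0 + 1, ?_, fun n hn x => ?_, ?_⟩
  · linarith [hA₀ 0, hA₀ 1, hB₀ 0 0, hB₀ 0 1, hB₀ 1 0, hB₀ 1 1]
  · have hΓ := Gam_nonneg hn
    have hA' i := abs_of_nonneg hΓ ▸ hA i n x
    have hB' i j := abs_of_nonneg hΓ ▸ hB i j n x
    linarith [hA' 0, hA' 1, hB' 0 0, hB' 0 1, hB' 1 0, hB' 1 1]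
  · simpa only [mul_zero] using tendsto_Gam.const_mul _

/-- the initial data `u₀ⁿ = (∂₂f_n, −∂₁f_n)` is divergence-free and
satisfies `‖u₀ⁿ‖_{W^{1,∞}} ≤ C Γ_n`, hence `‖u₀ⁿ‖_{W^{1,∞}} → 0` as `n → ∞`. -/
theorem stmt18 (φ : EuclideanSpace ℝ (Fin 2) → ℝ)
    (hsm : ContDiff ℝ (⊤ : ℕ∞) φ)
    (hrange : ∀ ξ, φ ξ ∈ Set.Icc (0 : ℝ) 1)
    (hradial : ∀ ξ η : EuclideanSpace ℝ (Fin 2), ‖ξ‖ = ‖η‖ → φ ξ = φ η)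
    (hsupp : ∀ ξ, φ ξ ≠ 0 → 4 / 3 ≤ ‖ξ‖ ∧ ‖ξ‖ ≤ 3 / 2)
    (hne : φ ≠ 0) :
    (∀ n : ℕ, ∀ x : EuclideanSpace ℝ (Fin 2),
      D2 0 (D2 1 (fDamp φ n)) x + D2 1 (fun y => -(D2 0 (fDamp φ n) y)) x = 0) ∧
    ∃ C : ℝ, 0 < C ∧
      (∀ n : ℕ, 3 ≤ n → ∀ x : EuclideanSpace ℝ (Fin 2),
        ‖D2 1 (fDamp φ n) x‖ + ‖D2 0 (fDamp φ n) x‖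
          + ‖D2 0 (D2 1 (fDamp φ n)) x‖ + ‖D2 1 (D2 1 (fDamp φ n)) x‖
          + ‖D2 0 (D2 0 (fDamp φ n)) x‖ + ‖D2 1 (D2 0 (fDamp φ n)) x‖
            ≤ C * Gam n) ∧
      Tendsto (fun n : ℕ => C * Gam n) atTop (nhds 0) := by
  have hφ : HasCompactSupport φ :=
    .of_support_subset_isCompact (isCompact_closedBall 0 (3 / 2)) fun ξ hξ =>
      mem_closedBall_zero_iff.mpr (hsupp ξ hξ).2
  exact stmt18_general (hφ.toSchwartzMap hsm)
    (integral_coord_mul_coord_mul_eq_zero_of_radial hradial)
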